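/- (Noncommutative root space Poisson-type bracket algebra, identity (7).) Define bilinear mappings on ℰ by K₀(φ, ψ) = −i·D_{ord φ}(φ ˆ ψ), K₊(φ, ψ) = −i·φ ˆ (D₁ ψ), K₋(φ, ψ) = i·ψ ˆ (D₁ φ), and K₀₀(φ, ψ) = K₊(φ, ψ) + K₋(φ, ψ) on nonempty words. Then for all words φ, χ over E of tensor order at least 2 and every nonempty word ψ over E: K₀₀(ψ, K₀(φ, χ)) = K₀(K₊(ψ, φ), χ) + K₀(φ, K₋(ψ, χ)) in ℰ. -/

import Mathlib

/-- The gluing (concatenation) operation on words over `E`: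
`(xs ++ [a]) ˆ (b :: ys) = xs ++ [a * b] ++ ys`. -/
def glue {E : Type*} [Mul E] : List E → List E → List E
  | [], ys => ys
  | [a], [] => [a]
  | [a], b :: ys => (a * b) :: ys
  | a :: b :: as, ys => a :: glue (b :: as) ys

/-- `applyAt f k w` applies `f` to the `k`-th (1-based) entry of the word `w`. -/
def applyAt {E : Type*} (f : E → E) : ℕ → List E → List E
  | _, [] => []
  | 0, w => w
  | 1, a :: as => f a :: as
  | k+2, a :: as => a :: applyAt f (k+1) as

/-- The basis element of the root space `ℰ` (the monoid algebra of the free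
monoid on `E` over `ℂ`) corresponding to the word `w`, representing the
pure tensor `w₁ ⊗ ⋯ ⊗ w_N`. -/
noncomputable def bw {E : Type*} (w : List E) : MonoidAlgebra ℂ (FreeMonoid E) :=
  MonoidAlgebra.single (FreeMonoid.ofList w) 1

/-!
Gluing is associative, `D_j` and `D_k` commute for `j ≠ k`, and `D_k` passes through a gluing as
long as `k` does not point at the glued entry. Hence, for `ord φ ≥ 2` and `ord χ ≥ 2`,
`ψ ˆ D₁ (D_{ord φ} (φ ˆ χ))` and `D_{ord φ} (φ ˆ χ) ˆ D₁ ψ` are the words of `K₀(K₊(ψ, φ), χ)` and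
`K₀(φ, K₋(ψ, χ))`; the bounds on the orders keep the entry where `φ` meets `χ` apart from both ends
of `φ ˆ χ`, where `ψ` is attached.
-/

section ApplyAt

variable {E : Type*} (f : E → E)

theorem applyAt_zero (w : List E) : applyAt f 0 w = w := by
  cases w <;> rfl

theorem applyAt_succ (k : ℕ) (w : List E) : applyAt f (k + 1) w = w.modify k f := by
  induction w generalizing k with
  | nil => simp [applyAt]
  | cons a w ih => cases k <;> simp [applyAt, ih]

theorem length_applyAt (k : ℕ) (w : List E) : (applyAt f k w).length = w.length := by
  cases k <;> simp [applyAt_zero, applyAt_succ]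

theorem applyAt_eq_nil_iff {k : ℕ} {w : List E} : applyAt f k w = [] ↔ w = [] := by
  rw [← List.length_eq_zero_iff, length_applyAt, List.length_eq_zero_iff]

theorem applyAt_comm (g : E → E) {j k : ℕ} (hjk : j ≠ k) (w : List E) :
    applyAt f j (applyAt g k w) = applyAt g k (applyAt f j w) := by
  cases j with
  | zero => simp only [applyAt_zero]
  | succ j =>
    cases k with
    | zero => simp only [applyAt_zero]
    | succ k =>
      simp only [applyAt_succ]
      exact List.modify_modify_ne g f w (by omega)

end ApplyAt

section Glue

variable {E : Type*}

theorem glue_cons_of_ne_nil [Mul E] (a : E) {u : List E} (hu : u ≠ []) (v : List E) :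
    glue (a :: u) v = a :: glue u v := by
  obtain ⟨b, u, rfl⟩ := List.exists_cons_of_ne_nil hu
  rfl

theorem glue_eq_nil_iff [Mul E] {u v : List E} : glue u v = [] ↔ u = [] ∧ v = [] := by
  fun_cases glue u v <;> simp

theorem length_glue_add_one [Mul E] {u v : List E} (hu : u ≠ []) (hv : v ≠ []) :
    (glue u v).length + 1 = u.length + v.length := by
  fun_induction glue u v with
  | case1 => contradiction
  | case2 => contradiction
  | case3 a b v => simp only [List.length_cons, List.length_nil]; omega
  | case4 a b u v ih =>
    have := ih (List.cons_ne_nil b u) hv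
    simp only [List.length_cons] at this ⊢
    omega

theorem glue_assoc [Semigroup E] (u v w : List E) : glue (glue u v) w = glue u (glue v w) := by
  fun_induction glue u v with
  | case1 => rfl
  | case2 => rfl
  | case3 a b v => cases v <;> cases w <;> simp [glue, mul_assoc]
  | case4 a b u v ih =>
    rw [glue_cons_of_ne_nil a (by simp [glue_eq_nil_iff]), ih,
      glue_cons_of_ne_nil a (List.cons_ne_nil b u)]

theorem applyAt_glue_of_lt_length [Mul E] (f : E → E) {k : ℕ} {u : List E} (hk : k < u.length)
    (v : List E) : applyAt f k (glue u v) = glue (applyAt f k u) v := by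
  induction u generalizing k with
  | nil => contradiction
  | cons a u ih =>
    match k with
    | 0 => simp only [applyAt_zero]
    | 1 =>
      have hu : u ≠ [] := List.ne_nil_of_length_pos (Nat.lt_of_succ_lt_succ hk)
      simp only [applyAt, glue_cons_of_ne_nil _ hu]
    | k + 2 =>
      have hk' : k + 1 < u.length := Nat.lt_of_succ_lt_succ hk
      have hu : u ≠ [] := List.ne_nil_of_length_pos (by omega)
      have hu' : applyAt f (k + 1) u ≠ [] := (applyAt_eq_nil_iff f).not.mpr hu
      simp only [applyAt, glue_cons_of_ne_nil _ hu, glue_cons_of_ne_nil _ hu', ih hk']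

theorem applyAt_length_add_succ_glue [Mul E] (f : E → E) (k : ℕ) {u : List E} (hu : u ≠ [])
    (v : List E) : applyAt f (u.length + k + 1) (glue u v) = glue u (applyAt f (k + 2) v) := by
  fun_induction glue u v with
  | case1 => contradiction
  | case2 a => simp [applyAt_succ, glue, Nat.add_comm 1 k]
  | case3 a b v => simp [applyAt_succ, glue, Nat.add_comm 1 k]
  | case4 a b u v ih =>
    rw [glue_cons_of_ne_nil a (List.cons_ne_nil b u), ← ih (List.cons_ne_nil b u)]
    simp [applyAt_succ, Nat.add_right_comm _ 1 k]

end Glue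

section GluedDerivative

variable {E : Type*} [Semigroup E] (f : E → E)

theorem glue_applyAt_one_applyAt_length_glue {φ ψ : List E} (hφ : 2 ≤ φ.length) (hψ : ψ ≠ [])
    (χ : List E) :
    glue ψ (applyAt f 1 (applyAt f φ.length (glue φ χ))) =
      applyAt f (glue ψ (applyAt f 1 φ)).length (glue (glue ψ (applyAt f 1 φ)) χ) := by
  obtain ⟨k, hk⟩ : ∃ k, φ.length = k + 2 := Nat.exists_eq_add_of_le' hφ
  have hφ' : applyAt f 1 φ ≠ [] := by
    rw [Ne, applyAt_eq_nil_iff, ← List.length_eq_zero_iff]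
    omega
  have length_glue : (glue ψ (applyAt f 1 φ)).length = ψ.length + k + 1 := by
    have := length_glue_add_one hψ hφ'
    rw [length_applyAt] at this
    omega
  calc glue ψ (applyAt f 1 (applyAt f φ.length (glue φ χ)))
    _ = glue ψ (applyAt f φ.length (applyAt f 1 (glue φ χ))) := by
      rw [applyAt_comm f f (by omega)]
    _ = glue ψ (applyAt f (k + 2) (glue (applyAt f 1 φ) χ)) := by
      rw [applyAt_glue_of_lt_length f hφ, hk]
    _ = applyAt f (ψ.length + k + 1) (glue ψ (glue (applyAt f 1 φ) χ)) :=
      (applyAt_length_add_succ_glue f k hψ _).symm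
    _ = _ := by rw [length_glue, glue_assoc]

theorem glue_applyAt_length_glue {φ χ : List E} (hφ : φ ≠ []) (hχ : 2 ≤ χ.length) (ψ : List E) :
    glue (applyAt f φ.length (glue φ χ)) ψ = applyAt f φ.length (glue φ (glue χ ψ)) := by
  have hχ' : χ ≠ [] := List.ne_nil_of_length_pos (by omega)
  have length_lt : φ.length < (glue φ χ).length := by
    have := length_glue_add_one hφ hχ'
    omega
  rw [← applyAt_glue_of_lt_length f length_lt, glue_assoc]

end GluedDerivative

theorem ncrs_poisson_type_7_general {E : Type*} [Semigroup E] (d : E → E)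
    (K0 Kp Km K00 : MonoidAlgebra ℂ (FreeMonoid E) →ₗ[ℂ]
         MonoidAlgebra ℂ (FreeMonoid E) →ₗ[ℂ] MonoidAlgebra ℂ (FreeMonoid E))
    (h0 : ∀ φ ψ : List E, φ ≠ [] → ψ ≠ [] →
      K0 (bw φ) (bw ψ) = (-Complex.I) • bw (applyAt d φ.length (glue φ ψ)))
    (hp : ∀ φ ψ : List E, φ ≠ [] → ψ ≠ [] →
      Kp (bw φ) (bw ψ) = (-Complex.I) • bw (glue φ (applyAt d 1 ψ)))
    (hm : ∀ φ ψ : List E, φ ≠ [] → ψ ≠ [] →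
      Km (bw φ) (bw ψ) = Complex.I • bw (glue ψ (applyAt d 1 φ)))
    (h00 : ∀ φ ψ : List E, φ ≠ [] → ψ ≠ [] →
      K00 (bw φ) (bw ψ) = Kp (bw φ) (bw ψ) + Km (bw φ) (bw ψ))
    (φ ψ χ : List E) (hφ : 2 ≤ φ.length) (hψ : ψ ≠ []) (hχ : 2 ≤ χ.length) :
    K00 (bw ψ) (K0 (bw φ) (bw χ)) =
      K0 (Kp (bw ψ) (bw φ)) (bw χ) + K0 (bw φ) (Km (bw ψ) (bw χ)) := by
  have hφ' : φ ≠ [] := List.ne_nil_of_length_pos (by omega)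
  have hχ' : χ ≠ [] := List.ne_nil_of_length_pos (by omega)
  have hφχ : applyAt d φ.length (glue φ χ) ≠ [] := by
    simp [applyAt_eq_nil_iff, glue_eq_nil_iff, hφ']
  have hψφ : glue ψ (applyAt d 1 φ) ≠ [] := by simp [glue_eq_nil_iff, hψ]
  have hχψ : glue χ (applyAt d 1 ψ) ≠ [] := by simp [glue_eq_nil_iff, hχ']
  calc K00 (bw ψ) (K0 (bw φ) (bw χ))
    _ = -Complex.I • (-Complex.I • bw (glue ψ (applyAt d 1 (applyAt d φ.length (glue φ χ)))) +
          Complex.I • bw (glue (applyAt d φ.length (glue φ χ)) (applyAt d 1 ψ))) := by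
      rw [h0 φ χ hφ' hχ', map_smul, h00 ψ _ hψ hφχ, hp ψ _ hψ hφχ, hm ψ _ hψ hφχ]
    _ = -Complex.I • (-Complex.I • bw (applyAt d (glue ψ (applyAt d 1 φ)).length
            (glue (glue ψ (applyAt d 1 φ)) χ)) +
          Complex.I • bw (applyAt d φ.length (glue φ (glue χ (applyAt d 1 ψ))))) := by
      rw [glue_applyAt_one_applyAt_length_glue d hφ hψ, glue_applyAt_length_glue d hφ' hχ]
    _ = K0 (Kp (bw ψ) (bw φ)) (bw χ) + K0 (bw φ) (Km (bw ψ) (bw χ)) := by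
      rw [hp ψ φ hψ hφ', hm ψ χ hψ hχ', map_smul, LinearMap.smul_apply, map_smul,
        h0 _ χ hψφ hχ', h0 φ _ hφ' hχψ, smul_add, smul_comm (-Complex.I) Complex.I]

/-- the noncommutative root space Poisson-type bracket algebra,
identity (7). On nonempty basis words: `K₀(φ, ψ) = −i·D_{ord φ}(φ ˆ ψ)`,
`K₊(φ, ψ) = −i·φ ˆ (D₁ ψ)`, `K₋(φ, ψ) = i·ψ ˆ (D₁ φ)`,
`K₀₀(φ, ψ) = K₊(φ, ψ) + K₋(φ, ψ)`. -/
theorem ncrs_poisson_type_7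
    (E : Type*) [Ring E] [Algebra ℂ E] (d : E →ₗ[ℂ] E)
    (K0 Kp Km K00 : MonoidAlgebra ℂ (FreeMonoid E) →ₗ[ℂ]
         MonoidAlgebra ℂ (FreeMonoid E) →ₗ[ℂ] MonoidAlgebra ℂ (FreeMonoid E))
    (h0 : ∀ φ ψ : List E, φ ≠ [] → ψ ≠ [] →
      K0 (bw φ) (bw ψ) = (-Complex.I) • bw (applyAt (⇑d) φ.length (glue φ ψ)))
    (hp : ∀ φ ψ : List E, φ ≠ [] → ψ ≠ [] →
      Kp (bw φ) (bw ψ) = (-Complex.I) • bw (glue φ (applyAt (⇑d) 1 ψ)))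
    (hm : ∀ φ ψ : List E, φ ≠ [] → ψ ≠ [] →
      Km (bw φ) (bw ψ) = Complex.I • bw (glue ψ (applyAt (⇑d) 1 φ)))
    (h00 : ∀ φ ψ : List E, φ ≠ [] → ψ ≠ [] →
      K00 (bw φ) (bw ψ) = Kp (bw φ) (bw ψ) + Km (bw φ) (bw ψ))
    (hz : ∀ x, K0 (bw ([] : List E)) x = 0 ∧ K0 x (bw ([] : List E)) = 0 ∧
               Kp (bw ([] : List E)) x = 0 ∧ Kp x (bw ([] : List E)) = 0 ∧
               Km (bw ([] : List E)) x = 0 ∧ Km x (bw ([] : List E)) = 0 ∧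
               K00 (bw ([] : List E)) x = 0 ∧ K00 x (bw ([] : List E)) = 0) :
    ∀ φ ψ χ : List E, 2 ≤ φ.length → ψ ≠ [] → 2 ≤ χ.length →
      K00 (bw ψ) (K0 (bw φ) (bw χ)) =
        K0 (Kp (bw ψ) (bw φ)) (bw χ) + K0 (bw φ) (Km (bw ψ) (bw χ)) :=
  ncrs_poisson_type_7_general d K0 Kp Km K00 h0 hp hm h00
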